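/- arXiv:2605.20841 — 3 statements merged into one kernel-verified Lean document; each statement's English description precedes it below -/
import Mathlib

section
/- Let 𝒞 be a canonical subset of a Brouwer algebra L, and let {a_i : i ∈ I} and {b_j : j ∈ J} be finite nonempty families of elements of 𝒞. Then: (1) ⨅_{i∈I} a_i ≤ ⨅_{j∈J} b_j if and only if for every j ∈ J there exists i ∈ I with a_i ≤ b_j; (2) (⨅_{i∈I} a_i) → (⨅_{j∈J} b_j) = ⨆_{i∈I} ⨅_{j∈J} (a_i → b_j). -/
/-!
In a distributive lattice a meet-irreducible element `x` is meet-prime: if `p ⊓ q ≤ x`, then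
`x = (x ⊔ p) ⊓ (x ⊔ q)`, so one of the factors equals `x`. By induction a finite nonempty meet lies
below `x` only if one of its members does, which gives the comparison of meets. For the implication,
`z \ (p ⊓ q) = (z \ p) ⊔ (z \ q)` holds in every co-Heyting algebra and turns the meet of the `a i`
into a join; the meet of the `b j` is then pulled out by the distributivity that canonicity
provides.
-/

/-- An element of a lattice is meet-irreducible if it is not the meet of two
strictly larger elements. -/
def MeetIrred {L : Type*} [Lattice L] (x : L) : Prop :=
  ¬ ∃ y z, x < y ∧ x < z ∧ x = y ⊓ z

/-- A canonical subset of a Brouwer algebra (a co-Heyting algebra, `a → b`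
being realized as `b \ a`): implications out of its elements distribute over
meets, its elements are meet-irreducible, and it is closed under `⊔` and `→`. -/
def CanonicalSet {L : Type*} [CoheytingAlgebra L] (C : Set L) : Prop :=
  (∀ a ∈ C, ∀ b c : L, (b ⊓ c) \ a = (b \ a) ⊓ (c \ a)) ∧
  (∀ a ∈ C, MeetIrred a) ∧
  (∀ a ∈ C, ∀ b ∈ C, a ⊔ b ∈ C ∧ b \ a ∈ C)

lemma MeetIrred.le_or_le {L : Type*} [DistribLattice L] {x : L} (hx : MeetIrred x) {p q : L}
    (h : p ⊓ q ≤ x) : p ≤ x ∨ q ≤ x := by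
  by_contra! hpq
  refine hx ⟨x ⊔ p, x ⊔ q, left_lt_sup.2 hpq.1, left_lt_sup.2 hpq.2, ?_⟩
  rw [← sup_inf_left, sup_eq_left.2 h]

lemma MeetIrred.exists_le_of_inf'_le {L ι : Type*} [DistribLattice L] {x : L} (hx : MeetIrred x)
    {s : Finset ι} (hs : s.Nonempty) (a : ι → L) (h : s.inf' hs a ≤ x) : ∃ i ∈ s, a i ≤ x := by
  induction hs using Finset.Nonempty.cons_induction with
  | singleton i => exact ⟨i, by simp, by simpa using h⟩
  | cons i s hi hs ih =>
    rw [Finset.inf'_cons hs] at h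
    rcases hx.le_or_le h with h | h
    · exact ⟨i, by simp, h⟩
    · obtain ⟨k, hk, hle⟩ := ih h
      exact ⟨k, by simp [hk], hle⟩

/-- For finite nonempty families from a canonical subset of a Brouwer algebra:
(1) comparison of finite meets reduces to elementwise comparison;
(2) implication between finite meets is the join over `i` of the meets over `j`
of the implications `a i → b j` (recall `a → b` is `b \ a`). -/
theorem canonical_meets (L : Type*) [CoheytingAlgebra L]
    (C : Set L) (hC : CanonicalSet C)
    (s t : Finset ℕ) (hs : s.Nonempty) (ht : t.Nonempty)
    (a b : ℕ → L) (ha : ∀ i ∈ s, a i ∈ C) (hb : ∀ j ∈ t, b j ∈ C) :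
    (s.inf' hs a ≤ t.inf' ht b ↔ ∀ j ∈ t, ∃ i ∈ s, a i ≤ b j) ∧
    (t.inf' ht b) \ (s.inf' hs a)
      = s.sup' hs (fun i => t.inf' ht (fun j => (b j) \ (a i))) := by
  obtain ⟨hdist, hirr, -⟩ := hC
  refine ⟨⟨fun h j hj => ?_, fun h => Finset.le_inf' _ _ fun j hj => ?_⟩, ?_⟩
  · exact (hirr _ (hb j hj)).exists_le_of_inf'_le hs a (h.trans (Finset.inf'_le _ hj))
  · obtain ⟨i, hi, hij⟩ := h j hj
    exact (Finset.inf'_le _ hi).trans hij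
  -- `z \ ·` turns meets into joins, i.e. it preserves meets as a map into the order dual.
  · have h_out : t.inf' ht b \ s.inf' hs a = s.sup' hs fun i => t.inf' ht b \ a i :=
      Finset.apply_inf'_eq_inf'_comp (γ := Lᵒᵈ) hs
        (fun x => OrderDual.toDual (t.inf' ht b \ x)) fun _ _ => sdiff_inf (α := L)
    rw [h_out]
    refine Finset.sup'_congr hs rfl fun i hi => ?_
    exact Finset.apply_inf'_eq_inf'_comp ht (fun x => x \ a i) (hdist _ (ha i hi))
end

section
/- Let A, B₀, B₁, Z be D-mass problems with A Dyment–Muchnik, and suppose B₀∧B₁ ≤_D A⊕Z. Then there exist Z₀, Z₁ ⊆ Z such that Z ≡_D Z₀∧Z₁ and B_i ≤_D A⊕Z_i for i = 0,1. Consequently, for every Dyment–Muchnik D-mass problem A and all D-mass problems B₀, B₁: A→(B₀∧B₁) ≡_D (A→B₀)∧(A→B₁). -/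
/-!
Let `Φ` be the operator reducing `B₀ ∧ B₁` to `A ⊕ Z`. For `z ∈ Z` and `φ ∈ A`, `Φ(φ ⊕ z)` is a
function with value `0` or `1` at `0`. The point is that this value depends on `z` alone, and that it
can be enumerated from `z` by searching over all finite functions `σ` for a value of `Φ(σ ⊕ z)` at `0`.
Indeed, suppose `Φ(σ ⊕ z)` and `Φ(τ ⊕ z)` give values `i` and `j` at `0`. Fix `φ ∈ A` and shift it up
beyond the domains of `σ` and `τ`. The shift `φ'`, as well as `φ' ∪ σ` and `φ' ∪ τ`, enumerate `φ`
and so lie in `A`. If `k` is the value given by `φ'`, then `φ' ∪ σ` gives both `k` and `i`, hence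
`i = k`, and likewise `j = k`. So `Z` is partitioned into `Z₀` and `Z₁` by the value found, the search
yields an operator `z ↦ i⌢z` from `Z` to `Z₀ ∧ Z₁`, and on `A ⊕ Zᵢ` the operator `Φ` followed by
deletion of the first value lands in `Bᵢ`. This is `splitting`.

The distributivity law is then formal, from evaluation `B ≤_D A ⊕ (A → B)` (`dRed_plus_arrow`),
currying (`DRed.curry`) and the fact that `∧` is the infimum for `≤_D`: the splitting is applied to
`Z = A → (B₀ ∧ B₁)`.

That the operators used are enumeration operators is shown through the class `EP` of positive `Σ₁`
relations on `ℕ` and an enumerated set, which is closed under conjunction, disjunction, existential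
and bounded universal quantification, and substitution.
-/

def Dset (u : ℕ) : Set ℕ := {i | Nat.testBit u i}

def enumOp (W A : Set ℕ) : Set ℕ := {x | ∃ u, Nat.pair x u ∈ W ∧ Dset u ⊆ A}

def CE (W : Set ℕ) : Prop := ∃ f : ℕ →. ℕ, Partrec f ∧ W = f.Dom

def EnumRed (A B : Set ℕ) : Prop := ∃ W, CE W ∧ A = enumOp W B

def EnumEq (A B : Set ℕ) : Prop := EnumRed A B ∧ EnumRed B A

def WeStd (e : ℕ) : Set ℕ := {x | ((Denumerable.ofNat Nat.Partrec.Code e).eval x).Dom}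

def PhiStd (e : ℕ) : Set ℕ → Set ℕ := enumOp (WeStd e)

def pgraph (φ : ℕ →. ℕ) : Set ℕ := {n | n.unpair.2 ∈ φ n.unpair.1}

def peRed (φ ψ : ℕ →. ℕ) : Prop := EnumRed (pgraph φ) (pgraph ψ)

def pfAdd (φ ψ : ℕ →. ℕ) : ℕ →. ℕ := fun n => if n % 2 = 0 then φ (n / 2) else ψ (n / 2)

def pfCons (i : ℕ) (φ : ℕ →. ℕ) : ℕ →. ℕ := fun n => if n = 0 then Part.some i else φ (n - 1)

abbrev MassPb := Set (ℕ →. ℕ)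

def mpPlus (A B : MassPb) : MassPb := {h | ∃ φ ∈ A, ∃ ψ ∈ B, h = pfAdd φ ψ}

def mpCons (i : ℕ) (A : MassPb) : MassPb := pfCons i '' A

def mpWedge (A B : MassPb) : MassPb := mpCons 0 A ∪ mpCons 1 B

def mpArrow (A B : MassPb) : MassPb :=
  {h | ∃ e φ, h = pfCons e φ ∧ ∀ ψ ∈ A, ∃ χ ∈ B, pgraph χ = PhiStd e (pgraph (pfAdd φ ψ))}

def DRed (A B : MassPb) : Prop :=
  ∃ W, CE W ∧ ∀ ψ ∈ B, ∃ χ ∈ A, pgraph χ = enumOp W (pgraph ψ)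

def DEq (A B : MassPb) : Prop := DRed A B ∧ DRed B A

def DwRed (A B : MassPb) : Prop := ∀ ψ ∈ B, ∃ φ ∈ A, peRed φ ψ

def DwEq (A B : MassPb) : Prop := DwRed A B ∧ DwRed B A

def UpClosedE (A : MassPb) : Prop := ∀ φ ψ, φ ∈ A → peRed φ ψ → ψ ∈ A

def DMProblem (A : MassPb) : Prop := A.Nonempty ∧ UpClosedE A

def PartCompFn (φ : ℕ →. ℕ) : Prop := CE (pgraph φ)

def oplus (A B : Set ℕ) : Set ℕ := (fun x => 2*x) '' A ∪ (fun x => 2*x+1) '' B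

/-! ### Positive `Σ₁` relations -/

/-- `EP P` says that the relation `P a S`, between an element `a` of a coded type and a set `S ⊆ ℕ`
regarded as given by an enumeration, is a positive `Σ₁` relation: `P a S` holds iff some
certificate `c = (k, l)` passes the primitive recursive test `q a c` and every entry of the list
`l` belongs to `S`. The number `k` carries any further existential witnesses. -/
def EP {α : Type*} [Primcodable α] (P : α → Set ℕ → Prop) : Prop :=
  ∃ q : α → ℕ × List ℕ → Prop, PrimrecRel q ∧
    ∀ a S, P a S ↔ ∃ c, q a c ∧ ∀ y ∈ c.2, y ∈ S

namespace EP

variable {α β : Type*} [Primcodable α] [Primcodable β]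

/-- Certificates may be taken from any denumerable type, with the oracle questions read off by a
primitive recursive function. -/
theorem mk' {γ : Type*} [Denumerable γ] {P : α → Set ℕ → Prop} {q : α → γ → Prop}
    {g : γ → List ℕ} (hq : PrimrecRel q) (hg : Primrec g)
    (h : ∀ a S, P a S ↔ ∃ c, q a c ∧ ∀ y ∈ g c, y ∈ S) : EP P := by
  refine ⟨fun a c => q a (Denumerable.ofNat γ c.1) ∧ c.2 = g (Denumerable.ofNat γ c.1), ?_, ?_⟩
  · have h1 : Primrec fun p : α × (ℕ × List ℕ) => Denumerable.ofNat γ p.2.1 :=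
      (Primrec.ofNat γ).comp (Primrec.fst.comp Primrec.snd)
    exact (hq.comp Primrec.fst h1).and
      (Primrec.eq.comp (Primrec.snd.comp Primrec.snd) (hg.comp h1))
  · intro a S
    rw [h]
    constructor
    · rintro ⟨c, hc, hS⟩
      exact ⟨(Encodable.encode c, g c), by simpa using hc, hS⟩
    · rintro ⟨⟨n, l⟩, ⟨hc, hl⟩, hS⟩
      simp only at hl hS
      exact ⟨_, hc, hl ▸ hS⟩

theorem congr {P Q : α → Set ℕ → Prop} (hP : EP P) (h : ∀ a S, Q a S ↔ P a S) : EP Q := by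
  obtain ⟨q, hq, hP⟩ := hP
  exact ⟨q, hq, fun a S => (h a S).trans (hP a S)⟩

theorem comp {P : β → Set ℕ → Prop} (hP : EP P) {f : α → β} (hf : Primrec f) :
    EP fun a S => P (f a) S := by
  obtain ⟨q, hq, hP⟩ := hP
  exact ⟨fun a c => q (f a) c, hq.comp (hf.comp Primrec.fst) Primrec.snd, fun a S => hP _ S⟩

theorem prim {p : α → Prop} (hp : PrimrecPred p) : EP fun a _ => p a :=
  mk' (γ := ℕ) (q := fun a _ => p a) (g := fun _ => []) (hp.comp Primrec.fst) (Primrec.const _)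
    (by simp)

theorem mem {f : α → ℕ} (hf : Primrec f) : EP fun a S => f a ∈ S :=
  mk' (γ := ℕ) (q := fun a c => c = f a) (g := fun c => [c])
    (Primrec.eq.comp Primrec.snd (hf.comp Primrec.fst))
    (Primrec.list_cons.comp Primrec.id (Primrec.const _)) (by simp)

theorem and {P Q : α → Set ℕ → Prop} (hP : EP P) (hQ : EP Q) : EP fun a S => P a S ∧ Q a S := by
  obtain ⟨p, hp, hP⟩ := hP
  obtain ⟨q, hq, hQ⟩ := hQ
  refine mk' (γ := (ℕ × List ℕ) × (ℕ × List ℕ)) (q := fun a c => p a c.1 ∧ q a c.2)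
    (g := fun c => c.1.2 ++ c.2.2)
    ((hp.comp Primrec.fst (Primrec.fst.comp Primrec.snd)).and
      (hq.comp Primrec.fst (Primrec.snd.comp Primrec.snd)))
    (Primrec.list_append.comp (Primrec.snd.comp Primrec.fst) (Primrec.snd.comp Primrec.snd)) ?_
  intro a S
  rw [hP, hQ]
  constructor
  · rintro ⟨⟨c, h1, h2⟩, d, h3, h4⟩
    refine ⟨(c, d), ⟨h1, h3⟩, fun y hy => ?_⟩
    rcases List.mem_append.1 hy with h | h
    exacts [h2 y h, h4 y h]
  · rintro ⟨⟨c, d⟩, ⟨h1, h3⟩, h⟩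
    exact ⟨⟨c, h1, fun y hy => h y (List.mem_append_left _ hy)⟩,
      d, h3, fun y hy => h y (List.mem_append_right _ hy)⟩

theorem ex {γ : Type*} [Denumerable γ] {P : α × γ → Set ℕ → Prop} (hP : EP P) :
    EP fun a S => ∃ b, P (a, b) S := by
  obtain ⟨p, hp, hP⟩ := hP
  refine mk' (γ := γ × (ℕ × List ℕ)) (q := fun a c => p (a, c.1) c.2) (g := fun c => c.2.2)
    (hp.comp (Primrec.fst.pair (Primrec.fst.comp Primrec.snd)) (Primrec.snd.comp Primrec.snd))
    (Primrec.snd.comp Primrec.snd) ?_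
  intro a S
  simp only [hP, Prod.exists]

theorem or {P Q : α → Set ℕ → Prop} (hP : EP P) (hQ : EP Q) : EP fun a S => P a S ∨ Q a S := by
  obtain ⟨p, hp, hP⟩ := hP
  obtain ⟨q, hq, hQ⟩ := hQ
  refine ⟨fun a c => p a c ∨ q a c, PrimrecPred.or hp hq, fun a S => ?_⟩
  simp only [hP, hQ, or_and_right, exists_or]

/-- Closure under bounded universal quantification: a certificate for the conjunction is a list
containing certificates for all the conjuncts. -/
theorem ball {P : α × β → Set ℕ → Prop} (hP : EP P) {f : α → List β} (hf : Primrec f) :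
    EP fun a S => ∀ b ∈ f a, P (a, b) S := by
  obtain ⟨p, hp, hP⟩ := hP
  refine mk' (γ := List (ℕ × List ℕ)) (q := fun a c => ∀ b ∈ f a, ∃ d ∈ c, p (a, b) d)
    (g := fun c => c.flatMap Prod.snd) ?_
    (Primrec.list_flatMap Primrec.id (Primrec.snd.comp Primrec.snd).to₂) ?_
  · have h1 : PrimrecRel fun (d : ℕ × List ℕ) (x : β × α) => p (x.2, x.1) d :=
      hp.comp ((Primrec.snd.comp Primrec.snd).pair (Primrec.fst.comp Primrec.snd)) Primrec.fst
    have h2 : PrimrecRel fun (b : β) (x : α × List (ℕ × List ℕ)) => ∃ d ∈ x.2, p (x.1, b) d :=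
      h1.exists_mem_list.comp (Primrec.snd.comp Primrec.snd)
        (Primrec.fst.pair (Primrec.fst.comp Primrec.snd))
    exact h2.forall_mem_list.comp (hf.comp Primrec.fst) (Primrec.fst.pair Primrec.snd)
  · intro a S
    simp only [hP]
    constructor
    · intro h
      choose! d hd using h
      refine ⟨(f a).map d, fun b hb => ⟨d b, List.mem_map_of_mem hb, (hd b hb).1⟩, ?_⟩
      intro y hy
      obtain ⟨c, hc, hy⟩ := List.mem_flatMap.1 hy
      obtain ⟨b, hb, rfl⟩ := List.mem_map.1 hc
      exact (hd b hb).2 y hy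
    · rintro ⟨c, h1, h2⟩ b hb
      obtain ⟨d, hd, hp⟩ := h1 b hb
      exact ⟨d, hp, fun y hy => h2 y (List.mem_flatMap.2 ⟨d, hd, hy⟩)⟩

/-- Substitution of a uniformly enumerable family of operators for the set argument. -/
theorem subst {P : α → Set ℕ → Prop} (hP : EP P) {F : α → Set ℕ → Set ℕ}
    (hF : EP fun (p : α × ℕ) S => p.2 ∈ F p.1 S) : EP fun a S => P a (F a S) := by
  obtain ⟨p, hp, hP⟩ := hP
  have h1 : EP fun (x : α × (ℕ × List ℕ)) S => ∀ y ∈ x.2.2, y ∈ F x.1 S :=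
    ball (P := fun (z : (α × (ℕ × List ℕ)) × ℕ) S => z.2 ∈ F z.1.1 S)
      (hF.comp (f := fun z : (α × (ℕ × List ℕ)) × ℕ => (z.1.1, z.2))
        ((Primrec.fst.comp Primrec.fst).pair Primrec.snd)) (Primrec.snd.comp Primrec.snd)
  exact (ex ((prim hp).and h1)).congr fun a S => hP _ _

theorem mono {P : α → Set ℕ → Prop} (hP : EP P) {a : α} {S T : Set ℕ} (h : S ⊆ T) (ha : P a S) :
    P a T := by
  obtain ⟨p, hp, hP⟩ := hP
  obtain ⟨c, h1, h2⟩ := (hP _ _).1 ha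
  exact (hP _ _).2 ⟨c, h1, fun y hy => h (h2 y hy)⟩

/-- The use principle: a positive `Σ₁` fact depends on finitely many elements of `S`. -/
theorem exists_list {P : α → Set ℕ → Prop} (hP : EP P) {a : α} {S : Set ℕ} (ha : P a S) :
    ∃ l : List ℕ, (∀ y ∈ l, y ∈ S) ∧ P a {y | y ∈ l} := by
  obtain ⟨p, hp, hP⟩ := hP
  obtain ⟨c, h1, h2⟩ := (hP _ _).1 ha
  exact ⟨c.2, h2, (hP _ _).2 ⟨c, h1, fun y hy => hy⟩⟩

end EP

/-! ### Enumeration operators and c.e. sets -/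

theorem primrecRel_testBit : PrimrecRel fun u i : ℕ => Nat.testBit u i = true := by
  have hpow : Primrec₂ fun a b : ℕ => a ^ b := Primrec₂.unpaired'.1 Nat.Primrec.pow
  have h : PrimrecRel fun u i : ℕ => u / 2 ^ i % 2 = 1 :=
    Primrec.eq.comp (Primrec.nat_mod.comp (Primrec.nat_div.comp Primrec.fst
      (hpow.comp (Primrec.const 2) Primrec.snd)) (Primrec.const 2)) (Primrec.const 1)
  exact h.of_eq fun u i => by rw [Nat.testBit_eq_decide_div_mod_eq]; simp

theorem lt_of_testBit {u i : ℕ} (h : Nat.testBit u i = true) : i < u :=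
  lt_of_lt_of_le Nat.lt_two_pow_self (Nat.ge_two_pow_of_testBit h)

theorem exists_Dset_eq (l : List ℕ) : ∃ u, Dset u = {y | y ∈ l} := by
  induction l with
  | nil => exact ⟨0, by simp [Dset]⟩
  | cons a l ih =>
    obtain ⟨u, hu⟩ := ih
    refine ⟨2 ^ a ||| u, ?_⟩
    ext y
    have := Set.ext_iff.1 hu y
    simp only [Dset, Set.mem_ofPred_eq] at this
    simp only [Dset, Set.mem_ofPred_eq, Nat.testBit_or, Nat.testBit_two_pow, Bool.or_eq_true, this,
      List.mem_cons, decide_eq_true_eq]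
    rw [eq_comm]

theorem ce_of_exists {r : ℕ → ℕ × List ℕ → Prop} (hr : PrimrecRel r) : CE {m | ∃ c, r m c} := by
  classical
  have h : Primrec₂ fun m n : ℕ => decide (r m (Denumerable.ofNat (ℕ × List ℕ) n)) :=
    (hr.comp Primrec.fst ((Primrec.ofNat (ℕ × List ℕ)).comp Primrec.snd)).decide
  refine ⟨fun m => Nat.rfind fun n => Part.some (decide (r m (Denumerable.ofNat _ n))),
    Partrec.rfind (h.to_comp.partrec₂), ?_⟩
  ext m
  refine Iff.trans ?_ (Nat.rfind_dom
    (p := fun n => Part.some (decide (r m (Denumerable.ofNat (ℕ × List ℕ) n))))).symm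
  constructor
  · rintro ⟨c, hc⟩
    exact ⟨Encodable.encode c, by rw [Denumerable.ofNat_encode]; simpa using hc, fun _ => trivial⟩
  · rintro ⟨n, hn, -⟩
    exact ⟨Denumerable.ofNat _ n, by simpa using hn⟩

theorem exists_WeStd {W : Set ℕ} (h : CE W) : ∃ e, W = WeStd e := by
  obtain ⟨f, hf, rfl⟩ := h
  obtain ⟨c, rfl⟩ := Nat.Partrec.Code.exists_code.1 (Partrec.nat_iff.1 hf)
  exact ⟨Encodable.encode c, by ext x; simp [WeStd, PFun.Dom]⟩

/-- The operators `Φ_e` are enumerable uniformly in `e`. -/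
theorem EP.phi : EP fun (p : ℕ × ℕ) S => p.2 ∈ PhiStd p.1 S := by
  have h1 : PrimrecPred fun z : (ℕ × ℕ) × (ℕ × ℕ) =>
      (Nat.Partrec.Code.evaln z.2.2 (Denumerable.ofNat Nat.Partrec.Code z.1.1)
        (Nat.pair z.1.2 z.2.1)).isSome = true := by
    refine Primrec.eq.comp (Primrec.option_isSome.comp (Nat.Partrec.Code.primrec_evaln.comp
      (((Primrec.snd.comp Primrec.snd).pair
        ((Primrec.ofNat _).comp (Primrec.fst.comp Primrec.fst))).pair
        (Primrec₂.natPair.comp (Primrec.snd.comp Primrec.fst) (Primrec.fst.comp Primrec.snd)))))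
      (Primrec.const true)
  have h2 : EP fun (z : ((ℕ × ℕ) × (ℕ × ℕ))) S =>
      ∀ i ∈ List.range z.2.1, (¬ Nat.testBit z.2.1 i = true) ∨ i ∈ S :=
    EP.ball (P := fun (w : ((ℕ × ℕ) × (ℕ × ℕ)) × ℕ) S =>
        (¬ Nat.testBit w.1.2.1 w.2 = true) ∨ w.2 ∈ S)
      ((EP.prim (primrecRel_testBit.comp
        (Primrec.fst.comp (Primrec.snd.comp Primrec.fst)) Primrec.snd).not).or
          (EP.mem Primrec.snd))
      (Primrec.list_range.comp (Primrec.fst.comp Primrec.snd))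
  refine (EP.ex ((EP.prim h1).and h2)).congr fun p S => ?_
  have hS : ∀ u, (∀ i ∈ List.range u, (¬ Nat.testBit u i = true) ∨ i ∈ S) ↔ Dset u ⊆ S := by
    intro u
    constructor
    · intro h i hi
      exact (h i (List.mem_range.2 (lt_of_testBit hi))).resolve_left (fun h => h hi)
    · intro h i _
      by_cases hi : Nat.testBit u i = true
      exacts [Or.inr (h hi), Or.inl hi]
  have hW : ∀ m, m ∈ WeStd p.1 ↔ ∃ k,
      (Nat.Partrec.Code.evaln k (Denumerable.ofNat Nat.Partrec.Code p.1) m).isSome = true := by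
    intro m
    simp only [WeStd, Set.mem_ofPred_eq, Part.dom_iff_mem, Option.isSome_iff_exists,
      Nat.Partrec.Code.evaln_complete]
    exact exists_comm
  simp only [PhiStd, enumOp, Set.mem_ofPred_eq, hW, Prod.exists, hS, exists_and_right]

/-- `F` is an enumeration operator, expressed through positive `Σ₁` definability of `n ∈ F S`. By
`EOp.of_ce` and `EOp.exists_ce` these are exactly the operators `enumOp W` with `W` c.e. -/
def EOp (F : Set ℕ → Set ℕ) : Prop := EP fun (n : ℕ) S => n ∈ F S

theorem EOp.of_ce {W : Set ℕ} (h : CE W) : EOp (enumOp W) := by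
  obtain ⟨e, rfl⟩ := exists_WeStd h
  exact EP.phi.comp (f := fun n : ℕ => (e, n)) ((Primrec.const e).pair Primrec.id)

theorem EOp.exists_ce {F : Set ℕ → Set ℕ} (h : EOp F) : ∃ W, CE W ∧ ∀ S, F S = enumOp W S := by
  obtain ⟨q, hq, hF⟩ := h
  refine ⟨{m | ∃ c, q m.unpair.1 c ∧ ∀ y ∈ c.2, Nat.testBit m.unpair.2 y = true},
    ce_of_exists ?_, fun S => ?_⟩
  · have h1 : PrimrecRel fun (y m : ℕ) => Nat.testBit m.unpair.2 y = true :=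
      primrecRel_testBit.comp (Primrec.snd.comp (Primrec.unpair.comp Primrec.snd)) Primrec.fst
    exact (hq.comp (Primrec.fst.comp (Primrec.unpair.comp Primrec.fst)) Primrec.snd).and
      (h1.forall_mem_list.comp (Primrec.snd.comp Primrec.snd) Primrec.fst)
  · ext x
    simp only [hF, enumOp, Set.mem_ofPred_eq, Nat.unpair_pair]
    constructor
    · rintro ⟨c, h1, h2⟩
      obtain ⟨u, hu⟩ := exists_Dset_eq c.2
      refine ⟨u, ⟨c, h1, fun y hy => ?_⟩, hu ▸ h2⟩
      exact (Set.ext_iff.1 hu y).2 hy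
    · rintro ⟨u, ⟨c, h1, h2⟩, h3⟩
      exact ⟨c, h1, fun y hy => h3 (h2 y hy)⟩

theorem EOp.exists_phi {F : Set ℕ → Set ℕ} (h : EOp F) : ∃ e, ∀ S, F S = PhiStd e S := by
  obtain ⟨W, hW, h⟩ := h.exists_ce
  obtain ⟨e, rfl⟩ := exists_WeStd hW
  exact ⟨e, h⟩

theorem dRed_iff {A B : MassPb} :
    DRed A B ↔ ∃ F, EOp F ∧ ∀ ψ ∈ B, ∃ χ ∈ A, pgraph χ = F (pgraph ψ) := by
  constructor
  · rintro ⟨W, hW, h⟩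
    exact ⟨_, .of_ce hW, h⟩
  · rintro ⟨F, hF, h⟩
    obtain ⟨W, hW, e⟩ := hF.exists_ce
    exact ⟨W, hW, fun ψ hψ => by simpa only [← e] using h ψ hψ⟩

/-! ### Graphs of partial functions -/

@[simp] theorem mem_pgraph {φ : ℕ →. ℕ} {n : ℕ} : n ∈ pgraph φ ↔ n.unpair.2 ∈ φ n.unpair.1 :=
  Iff.rfl

theorem pgraph_unique {φ : ℕ →. ℕ} {x y z : ℕ} (hy : Nat.pair x y ∈ pgraph φ)
    (hz : Nat.pair x z ∈ pgraph φ) : y = z := by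
  simp only [mem_pgraph, Nat.unpair_pair] at hy hz
  exact Part.mem_unique hy hz

/-- The action of `φ ↦ i⌢φ` on graphs. -/
def sCons (i : ℕ) (S : Set ℕ) : Set ℕ :=
  {n | (n.unpair.1 = 0 ∧ n.unpair.2 = i) ∨
    (¬ n.unpair.1 = 0 ∧ Nat.pair (n.unpair.1 - 1) n.unpair.2 ∈ S)}

/-- The action on graphs of deleting the value at `0` and shifting down; a left inverse of
`sCons i`. -/
def sTail (S : Set ℕ) : Set ℕ := {n | Nat.pair (n.unpair.1 + 1) n.unpair.2 ∈ S}

/-- The action of `φ, ψ ↦ φ ⊕ ψ` on graphs. -/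
def sAdd (S T : Set ℕ) : Set ℕ :=
  {n | (n.unpair.1 % 2 = 0 ∧ Nat.pair (n.unpair.1 / 2) n.unpair.2 ∈ S) ∨
    (¬ n.unpair.1 % 2 = 0 ∧ Nat.pair (n.unpair.1 / 2) n.unpair.2 ∈ T)}

/-- The graph of `φ` extracted from that of `φ ⊕ ψ`. -/
def sLeft (S : Set ℕ) : Set ℕ := {n | Nat.pair (2 * n.unpair.1) n.unpair.2 ∈ S}

/-- The graph of `ψ` extracted from that of `φ ⊕ ψ`. -/
def sRight (S : Set ℕ) : Set ℕ := {n | Nat.pair (2 * n.unpair.1 + 1) n.unpair.2 ∈ S}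

theorem pgraph_pfCons (i : ℕ) (φ : ℕ →. ℕ) : pgraph (pfCons i φ) = sCons i (pgraph φ) := by
  ext n
  by_cases h : n.unpair.1 = 0 <;> simp [sCons, pfCons, h]

theorem pgraph_pfAdd (φ ψ : ℕ →. ℕ) : pgraph (pfAdd φ ψ) = sAdd (pgraph φ) (pgraph ψ) := by
  ext n
  by_cases h : n.unpair.1 % 2 = 0 <;> simp [sAdd, pfAdd, h, -Nat.mod_two_not_eq_zero]

theorem sTail_sCons (i : ℕ) (S : Set ℕ) : sTail (sCons i S) = S := by
  ext n
  simp [sTail, sCons]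

theorem zero_mem_sCons {i j : ℕ} {S : Set ℕ} : Nat.pair 0 j ∈ sCons i S ↔ j = i := by
  simp [sCons]

theorem sLeft_sAdd (S T : Set ℕ) : sLeft (sAdd S T) = S := by
  ext n
  simp [sLeft, sAdd]

theorem sRight_sAdd (S T : Set ℕ) : sRight (sAdd S T) = T := by
  ext n
  have h1 : (2 * n.unpair.1 + 1) / 2 = n.unpair.1 := by omega
  simp [sRight, sAdd, Nat.add_mod, h1]

theorem sAdd_mono {S T U : Set ℕ} (h : S ⊆ T) : sAdd S U ⊆ sAdd T U := by
  rintro n (⟨h1, h2⟩ | h1)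
  exacts [Or.inl ⟨h1, h h2⟩, Or.inr h1]

theorem primrec_fst : Primrec fun n : ℕ => n.unpair.1 := Primrec.fst.comp Primrec.unpair

theorem primrec_snd : Primrec fun n : ℕ => n.unpair.2 := Primrec.snd.comp Primrec.unpair

theorem EOp.id : EOp fun S => S := EP.mem Primrec.id

theorem EOp.comp {F G : Set ℕ → Set ℕ} (hF : EOp F) (hG : EOp G) : EOp fun S => F (G S) :=
  EP.subst hF (F := fun _ S => G S) (EP.comp hG Primrec.snd)

/-- `sAdd` preserves enumerability of operators, uniformly in a parameter. -/
theorem EP.sAdd {α : Type*} [Primcodable α] {F G : α → Set ℕ → Set ℕ}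
    (hF : EP fun (p : α × ℕ) S => p.2 ∈ F p.1 S) (hG : EP fun (p : α × ℕ) S => p.2 ∈ G p.1 S) :
    EP fun (p : α × ℕ) S => p.2 ∈ sAdd (F p.1 S) (G p.1 S) := by
  have h2 : Primrec fun p : α × ℕ => p.2.unpair.1 := primrec_fst.comp Primrec.snd
  have h1 : PrimrecPred fun p : α × ℕ => p.2.unpair.1 % 2 = 0 :=
    Primrec.eq.comp (Primrec.nat_mod.comp h2 (Primrec.const 2)) (Primrec.const 0)
  have h3 : Primrec fun p : α × ℕ => (p.1, Nat.pair (p.2.unpair.1 / 2) p.2.unpair.2) :=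
    Primrec.fst.pair (Primrec₂.natPair.comp (Primrec.nat_div.comp h2 (Primrec.const 2))
      (primrec_snd.comp Primrec.snd))
  exact ((EP.prim h1).and (hF.comp h3)).or ((EP.prim h1.not).and (hG.comp h3))

theorem EOp.sAdd {F G : Set ℕ → Set ℕ} (hF : EOp F) (hG : EOp G) :
    EOp fun S => sAdd (F S) (G S) :=
  (EP.sAdd (α := Unit) (F := fun _ => F) (G := fun _ => G) (EP.comp hF Primrec.snd)
    (EP.comp hG Primrec.snd)).comp (f := fun n : ℕ => ((), n)) ((Primrec.const _).pair Primrec.id)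

theorem eOp_sTail : EOp sTail :=
  EP.mem (Primrec₂.natPair.comp (Primrec.succ.comp primrec_fst) primrec_snd)

theorem eOp_sLeft : EOp sLeft :=
  EP.mem (Primrec₂.natPair.comp (Primrec.nat_mul.comp (Primrec.const 2) primrec_fst) primrec_snd)

theorem eOp_sRight : EOp sRight :=
  EP.mem (Primrec₂.natPair.comp
    (Primrec.succ.comp (Primrec.nat_mul.comp (Primrec.const 2) primrec_fst)) primrec_snd)

/-- The operator that shifts a graph up by one and puts at argument `0` the values enumerated by
`P`. -/
theorem EOp.cons {P : ℕ → Set ℕ → Prop} (hP : EP P) :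
    EOp fun S => {n | (n.unpair.1 = 0 ∧ P n.unpair.2 S) ∨
      (¬ n.unpair.1 = 0 ∧ Nat.pair (n.unpair.1 - 1) n.unpair.2 ∈ S)} := by
  have h : PrimrecPred fun n : ℕ => n.unpair.1 = 0 := Primrec.eq.comp primrec_fst (Primrec.const 0)
  exact ((EP.prim h).and (hP.comp primrec_snd)).or ((EP.prim h.not).and
    (EP.mem (Primrec₂.natPair.comp (Primrec.nat_sub.comp primrec_fst (Primrec.const 1))
      primrec_snd)))

theorem eOp_sCons (i : ℕ) : EOp (sCons i) :=
  EOp.cons (P := fun n _ => n = i) (EP.prim (Primrec.eq.comp Primrec.id (Primrec.const i)))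

/-! ### The lattice of D-mass problems and the arrow -/

theorem DRed.trans {A B C : MassPb} (h1 : DRed A B) (h2 : DRed B C) : DRed A C := by
  rw [dRed_iff] at *
  obtain ⟨F, hF, h1⟩ := h1
  obtain ⟨G, hG, h2⟩ := h2
  refine ⟨_, hF.comp hG, fun ψ hψ => ?_⟩
  obtain ⟨χ, hχ, e⟩ := h2 ψ hψ
  obtain ⟨ξ, hξ, e'⟩ := h1 χ hχ
  exact ⟨ξ, hξ, by rw [e', e]⟩

theorem dRed_wedge_left (A B : MassPb) : DRed (mpWedge A B) A :=
  dRed_iff.2 ⟨_, eOp_sCons 0, fun ψ hψ => ⟨pfCons 0 ψ, Or.inl ⟨ψ, hψ, rfl⟩, pgraph_pfCons _ _⟩⟩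

theorem dRed_wedge_right (A B : MassPb) : DRed (mpWedge A B) B :=
  dRed_iff.2 ⟨_, eOp_sCons 1, fun ψ hψ => ⟨pfCons 1 ψ, Or.inr ⟨ψ, hψ, rfl⟩, pgraph_pfCons _ _⟩⟩

theorem DRed.wedge {A B C : MassPb} (h1 : DRed C A) (h2 : DRed C B) : DRed C (mpWedge A B) := by
  rw [dRed_iff] at *
  obtain ⟨F, hF, h1⟩ := h1
  obtain ⟨G, hG, h2⟩ := h2
  have hm : ∀ i : ℕ, EP fun (_ : ℕ) S => Nat.pair 0 i ∈ S := fun i => EP.mem (Primrec.const _)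
  refine ⟨fun S => {n | (Nat.pair 0 0 ∈ S ∧ n ∈ F (sTail S)) ∨
    (Nat.pair 0 1 ∈ S ∧ n ∈ G (sTail S))},
    ((hm 0).and (hF.comp eOp_sTail)).or ((hm 1).and (hG.comp eOp_sTail)), ?_⟩
  rintro _ (⟨ψ, hψ, rfl⟩ | ⟨ψ, hψ, rfl⟩)
  · obtain ⟨χ, hχ, e⟩ := h1 ψ hψ
    refine ⟨χ, hχ, ?_⟩
    simp [pgraph_pfCons, sTail_sCons, zero_mem_sCons, e]
  · obtain ⟨χ, hχ, e⟩ := h2 ψ hψ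
    refine ⟨χ, hχ, ?_⟩
    simp [pgraph_pfCons, sTail_sCons, zero_mem_sCons, e]

/-- Evaluation: `B ≤_D A ⊕ (A → B)`, by the universal operator. -/
theorem dRed_plus_arrow (A B : MassPb) : DRed B (mpPlus A (mpArrow A B)) := by
  rw [dRed_iff]
  have hG : EOp fun S => sAdd (sTail (sRight S)) (sLeft S) :=
    (eOp_sTail.comp eOp_sRight).sAdd eOp_sLeft
  have h1 : EP fun (p : ℕ × ℕ) S => p.1 ∈ PhiStd p.2 (sAdd (sTail (sRight S)) (sLeft S)) :=
    EP.subst (P := fun (p : ℕ × ℕ) S => p.1 ∈ PhiStd p.2 S)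
      (EP.phi.comp (f := fun p : ℕ × ℕ => (p.2, p.1)) (Primrec.snd.pair Primrec.fst))
      (F := fun _ S => sAdd (sTail (sRight S)) (sLeft S)) (EP.comp hG Primrec.snd)
  have h2 : EP fun (p : ℕ × ℕ) S => Nat.pair 0 p.2 ∈ sRight S :=
    EP.comp eOp_sRight (Primrec₂.natPair.comp (Primrec.const 0) Primrec.snd)
  refine ⟨fun S => {n | ∃ e, Nat.pair 0 e ∈ sRight S ∧
    n ∈ PhiStd e (sAdd (sTail (sRight S)) (sLeft S))}, EP.ex (h2.and h1), ?_⟩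
  rintro _ ⟨ψ, hψ, _, ⟨e, φ, rfl, h⟩, rfl⟩
  obtain ⟨χ, hχ, hg⟩ := h ψ hψ
  refine ⟨χ, hχ, ?_⟩
  rw [hg]
  simp [pgraph_pfCons, pgraph_pfAdd, sRight_sAdd, sLeft_sAdd, sTail_sCons, zero_mem_sCons]

/-- Currying: `B ≤_D A ⊕ Z` implies `A → B ≤_D Z`. -/
theorem DRed.curry {A B Z : MassPb} (h : DRed B (mpPlus A Z)) : DRed (mpArrow A B) Z := by
  rw [dRed_iff] at *
  obtain ⟨F, hF, h⟩ := h
  obtain ⟨e, he⟩ := (hF.comp (eOp_sRight.sAdd eOp_sLeft)).exists_phi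
  refine ⟨_, eOp_sCons e, fun φ hφ => ⟨pfCons e φ, ⟨e, φ, rfl, fun ψ hψ => ?_⟩,
    pgraph_pfCons _ _⟩⟩
  obtain ⟨χ, hχ, hg⟩ := h _ ⟨ψ, hψ, φ, hφ, rfl⟩
  refine ⟨χ, hχ, ?_⟩
  rw [hg, ← he, pgraph_pfAdd, pgraph_pfAdd, sRight_sAdd, sLeft_sAdd]

theorem DRed.arrow_mono {A B C : MassPb} (h : DRed B C) : DRed (mpArrow A B) (mpArrow A C) :=
  (h.trans (dRed_plus_arrow A C)).curry

/-! ### The splitting theorem -/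

/-- `φ` moved up by `n`, with the vacated positions below `n` filled by the entries of `σ` as far as
they go (and left undefined beyond that). -/
def splice (n : ℕ) (σ : List ℕ) (φ : ℕ →. ℕ) : ℕ →. ℕ :=
  fun k => if k < n then (σ[k]? : Option ℕ) else φ (k - n)

/-- The graph of the finite function `k ↦ σ[k]`, defined for `k < σ.length`. -/
def listGraph (σ : List ℕ) : Set ℕ := {n | σ[n.unpair.1]? = some n.unpair.2}

theorem listGraph_subset_splice {n : ℕ} {σ : List ℕ} (h : σ.length ≤ n) (φ : ℕ →. ℕ) :
    listGraph σ ⊆ pgraph (splice n σ φ) := by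
  intro k hk
  have hk' : σ[k.unpair.1]? = some k.unpair.2 := hk
  obtain ⟨hl, -⟩ := List.getElem?_eq_some_iff.1 hk'
  simp [splice, lt_of_lt_of_le hl h, hk']

theorem splice_nil_subset (n : ℕ) (σ : List ℕ) (φ : ℕ →. ℕ) :
    pgraph (splice n [] φ) ⊆ pgraph (splice n σ φ) := by
  intro k hk
  by_cases h : k.unpair.1 < n
  · simp [splice, h] at hk
  · simpa [splice, h] using hk

/-- Consequently an upwards `≤_e`-closed problem containing `φ` contains every `splice n σ φ`. -/
theorem peRed_splice (n : ℕ) (σ : List ℕ) (φ : ℕ →. ℕ) : peRed φ (splice n σ φ) := by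
  have h : EOp fun S => {k | Nat.pair (k.unpair.1 + n) k.unpair.2 ∈ S} :=
    EP.mem (Primrec₂.natPair.comp (Primrec.nat_add.comp primrec_fst (Primrec.const n)) primrec_snd)
  obtain ⟨W, hW, e⟩ := h.exists_ce
  refine ⟨W, hW, ?_⟩
  rw [← e]
  ext k
  simp [splice]

/-- A finite part of `graph (φ ⊕ z)` already lies in `graph (σ ⊕ z)` for some finite `σ`. The arguments
where `φ` is undefined are filled with `0`, so `σ` need not be a restriction of `φ`. -/
theorem exists_listGraph {S : Set ℕ} {φ : ℕ →. ℕ} (l : List ℕ)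
    (hl : ∀ y ∈ l, y ∈ sAdd (pgraph φ) S) : ∃ σ, ∀ y ∈ l, y ∈ sAdd (listGraph σ) S := by
  classical
  refine ⟨(List.range (l.sum + 1)).map fun k => (φ k).getOrElse 0, fun y hy => ?_⟩
  rcases hl y hy with ⟨h1, h2⟩ | h
  · refine Or.inl ⟨h1, ?_⟩
    simp only [mem_pgraph, Nat.unpair_pair] at h2
    have hlt : y.unpair.1 / 2 < l.sum + 1 := by
      have := List.le_sum_of_mem hy
      have := Nat.unpair_left_le y
      omega
    obtain ⟨hd, he⟩ := h2
    simp [listGraph, hlt, Part.getOrElse_of_dom _ hd, he]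
  · exact Or.inr h

/-- The splitting of `Z`. Here `R z i` says that `Φ(σ ⊕ z)` has value `i` at `0` for some finite `σ`,
and `Zᵢ = {z ∈ Z | R z i}`. -/
theorem splitting {A B0 B1 Z : MassPb} (hA : DMProblem A)
    (h : DRed (mpWedge B0 B1) (mpPlus A Z)) :
    ∃ Z0 Z1 : MassPb, Z0 ⊆ Z ∧ Z1 ⊆ Z ∧ DEq Z (mpWedge Z0 Z1) ∧
      DRed B0 (mpPlus A Z0) ∧ DRed B1 (mpPlus A Z1) := by
  obtain ⟨⟨φ₀, hφ₀⟩, hup⟩ := hA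
  obtain ⟨F, hF, h⟩ := dRed_iff.1 h
  have hmono : ∀ {S T : Set ℕ} {n : ℕ}, S ⊆ T → n ∈ F S → n ∈ F T := fun hST hn => hF.mono hST hn
  let R : (ℕ →. ℕ) → ℕ → Prop := fun z i =>
    ∃ σ, Nat.pair 0 i ∈ F (sAdd (listGraph σ) (pgraph z))
  have hval : ∀ φ ∈ A, ∀ z ∈ Z, (∃ χ ∈ B0, F (pgraph (pfAdd φ z)) = sCons 0 (pgraph χ)) ∨
      (∃ χ ∈ B1, F (pgraph (pfAdd φ z)) = sCons 1 (pgraph χ)) := by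
    intro φ hφ z hz
    obtain ⟨_, ⟨χ, hχ, rfl⟩ | ⟨χ, hχ, rfl⟩, e⟩ := h _ ⟨φ, hφ, z, hz, rfl⟩
    · exact Or.inl ⟨χ, hχ, by rw [← e, pgraph_pfCons]⟩
    · exact Or.inr ⟨χ, hχ, by rw [← e, pgraph_pfCons]⟩
  have hex : ∀ φ ∈ A, ∀ z ∈ Z, ∃ i, Nat.pair 0 i ∈ F (pgraph (pfAdd φ z)) := by
    intro φ hφ z hz
    rcases hval φ hφ z hz with ⟨χ, -, e⟩ | ⟨χ, -, e⟩
    · exact ⟨0, by rw [e, zero_mem_sCons]⟩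
    · exact ⟨1, by rw [e, zero_mem_sCons]⟩
  have hsv : ∀ φ ∈ A, ∀ z ∈ Z, ∀ i j, Nat.pair 0 i ∈ F (pgraph (pfAdd φ z)) →
      Nat.pair 0 j ∈ F (pgraph (pfAdd φ z)) → i = j := by
    intro φ hφ z hz i j hi hj
    obtain ⟨χ, -, e⟩ := h _ ⟨φ, hφ, z, hz, rfl⟩
    rw [← e] at hi hj
    exact pgraph_unique hi hj
  have hR : ∀ φ z i, Nat.pair 0 i ∈ F (pgraph (pfAdd φ z)) → R z i := by
    intro φ z i hi
    rw [pgraph_pfAdd] at hi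
    obtain ⟨l, hl, hi⟩ := hF.exists_list hi
    obtain ⟨σ, hσ⟩ := exists_listGraph l hl
    exact ⟨σ, hmono hσ hi⟩
  have huniq : ∀ z ∈ Z, ∀ i j, R z i → R z j → i = j := by
    rintro z hz i j ⟨σ, hi⟩ ⟨τ, hj⟩
    have hsp : ∀ n ρ, splice n ρ φ₀ ∈ A := fun n ρ => hup _ _ hφ₀ (peRed_splice n ρ φ₀)
    -- The positions below `max |σ| |τ|` are left free, so the use of this computation is compatible
    -- with both `σ` and `τ`.
    obtain ⟨k, hk⟩ := hex _ (hsp (max σ.length τ.length) []) z hz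
    have key : ∀ ρ m, ρ.length ≤ max σ.length τ.length →
        Nat.pair 0 m ∈ F (sAdd (listGraph ρ) (pgraph z)) → m = k := by
      intro ρ m hρ hm
      refine hsv _ (hsp (max σ.length τ.length) ρ) z hz m k ?_ ?_
      · rw [pgraph_pfAdd]
        exact hmono (sAdd_mono (listGraph_subset_splice hρ φ₀)) hm
      · rw [pgraph_pfAdd] at hk ⊢
        exact hmono (sAdd_mono (splice_nil_subset _ ρ φ₀)) hk
    rw [key σ i (le_max_left _ _) hi, key τ j (le_max_right _ _) hj]
  refine ⟨{z | z ∈ Z ∧ R z 0}, {z | z ∈ Z ∧ R z 1}, fun z hz => hz.1, fun z hz => hz.1,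
    ⟨?_, ?_⟩, ?_, ?_⟩
  · have hsub : ∀ i, DRed Z {z | z ∈ Z ∧ R z i} := fun i =>
      dRed_iff.2 ⟨_, EOp.id, fun ψ hψ => ⟨ψ, hψ.1, rfl⟩⟩
    exact (hsub 0).wedge (hsub 1)
  · have hEP : EP fun (i : ℕ) S => ∃ σ : List ℕ, Nat.pair 0 i ∈ F (sAdd (listGraph σ) S) := by
      have h1 : EP fun (p : (ℕ × List ℕ) × ℕ) (_ : Set ℕ) => p.2 ∈ listGraph p.1.2 := by
        refine EP.prim (Primrec.eq.comp (Primrec.list_getElem?.comp (Primrec.snd.comp Primrec.fst)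
          (primrec_fst.comp Primrec.snd))
          (Primrec.option_some.comp (primrec_snd.comp Primrec.snd)))
      have h2 := EP.sAdd (F := fun (p : ℕ × List ℕ) _ => listGraph p.2) (G := fun _ S => S) h1
        (EP.mem Primrec.snd)
      exact EP.ex (EP.subst (P := fun (p : ℕ × List ℕ) S => Nat.pair 0 p.1 ∈ F S)
        (EP.comp hF (Primrec₂.natPair.comp (Primrec.const 0) Primrec.fst))
        (F := fun p S => sAdd (listGraph p.2) S) h2)
    refine dRed_iff.2 ⟨_, EOp.cons hEP, fun z hz => ?_⟩
    have hcons : ∀ i, R z i → pgraph (pfCons i z) = {n | (n.unpair.1 = 0 ∧ R z n.unpair.2) ∨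
        (¬ n.unpair.1 = 0 ∧ Nat.pair (n.unpair.1 - 1) n.unpair.2 ∈ pgraph z)} := by
      intro i hi
      have : ∀ j, R z j ↔ j = i := fun j => ⟨fun hj => huniq z hz j i hj hi, fun e => e ▸ hi⟩
      rw [pgraph_pfCons]
      simp only [this]
      rfl
    rcases hval φ₀ hφ₀ z hz with ⟨χ, -, e⟩ | ⟨χ, -, e⟩
    · have h0 : R z 0 := hR φ₀ z 0 (by rw [e, zero_mem_sCons])
      exact ⟨_, Or.inl ⟨z, ⟨hz, h0⟩, rfl⟩, hcons 0 h0⟩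
    · have h1 : R z 1 := hR φ₀ z 1 (by rw [e, zero_mem_sCons])
      exact ⟨_, Or.inr ⟨z, ⟨hz, h1⟩, rfl⟩, hcons 1 h1⟩
  · refine dRed_iff.2 ⟨_, eOp_sTail.comp hF, ?_⟩
    rintro _ ⟨φ, hφ, z, ⟨hz, h0⟩, rfl⟩
    rcases hval φ hφ z hz with ⟨χ, hχ, e⟩ | ⟨χ, hχ, e⟩
    · exact ⟨χ, hχ, by rw [e, sTail_sCons]⟩
    · exact absurd (huniq z hz 0 1 h0 (hR φ z 1 (by rw [e, zero_mem_sCons]))) (by simp)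
  · refine dRed_iff.2 ⟨_, eOp_sTail.comp hF, ?_⟩
    rintro _ ⟨φ, hφ, z, ⟨hz, h1⟩, rfl⟩
    rcases hval φ hφ z hz with ⟨χ, hχ, e⟩ | ⟨χ, hχ, e⟩
    · exact absurd (huniq z hz 0 1 (hR φ z 0 (by rw [e, zero_mem_sCons])) h1) (by simp)
    · exact ⟨χ, hχ, by rw [e, sTail_sCons]⟩

/-- If `A` is Dyment–Muchnik and `B₀ ∧ B₁ ≤_D A ⊕ Z`, then `Z` splits as
`Z ≡_D Z₀ ∧ Z₁` with `Zᵢ ⊆ Z` and `Bᵢ ≤_D A ⊕ Zᵢ`.  Consequently, for every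
Dyment–Muchnik `A` and all `B₀, B₁`:
`A → (B₀ ∧ B₁) ≡_D (A → B₀) ∧ (A → B₁)`. -/
theorem dm_arrow_distributes_over_meet (A B0 B1 Z : MassPb) (hA : DMProblem A)
    (h : DRed (mpWedge B0 B1) (mpPlus A Z)) :
    (∃ Z0 Z1 : MassPb, Z0 ⊆ Z ∧ Z1 ⊆ Z ∧ DEq Z (mpWedge Z0 Z1) ∧
      DRed B0 (mpPlus A Z0) ∧ DRed B1 (mpPlus A Z1)) ∧
    (∀ A' B0' B1' : MassPb, DMProblem A' →
      DEq (mpArrow A' (mpWedge B0' B1'))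
          (mpWedge (mpArrow A' B0') (mpArrow A' B1'))) := by
  refine ⟨splitting hA h, fun A' B0' B1' hA' => ⟨?_, ?_⟩⟩
  · exact (dRed_wedge_left B0' B1').arrow_mono.wedge (dRed_wedge_right B0' B1').arrow_mono
  · obtain ⟨Z0, Z1, -, -, ⟨-, hZ⟩, h0, h1⟩ := splitting hA' (dRed_plus_arrow A' (mpWedge B0' B1'))
    exact (((dRed_wedge_left _ _).trans h0.curry).wedge
      ((dRed_wedge_right _ _).trans h1.curry)).trans hZ
end

section
/- Let A and B be D-mass problems with B Dyment–Muchnik, and set D = {ψ : for every φ ∈ A, φ⊕ψ ∈ B}. Then: (i) B ≤_D A⊕D; (ii) for every D-mass problem Z with B ≤_D A⊕Z one has Z ⊆ D, and hence D ≤_D Z; consequently D ≡_D A→B; (iii) D is upwards ≤_e-closed; (iv) if moreover A is Dyment–Muchnik, then A⊕B ≡_D A ∩ B, so on Dyment–Muchnik problems the least upper bound under ≤_D is given by intersection. -/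
/-- The candidate implication `{ψ : ∀ φ ∈ A, φ ⊕ ψ ∈ B}`. -/
def mpArrowDM (A B : MassPb) : MassPb := {ψ | ∀ φ ∈ A, pfAdd φ ψ ∈ B}

/-! ### Computably enumerable sets -/

/-- A c.e. set is the union of an increasing, uniformly primitive recursive sequence of stages. -/
theorem CE.stages {W : Set ℕ} (h : CE W) : ∃ R : ℕ → ℕ → Prop, PrimrecRel R ∧
    (∀ m m' x, m ≤ m' → R m x → R m' x) ∧ ∀ x, x ∈ W ↔ ∃ m, R m x := by
  obtain ⟨f, hf, rfl⟩ := h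
  obtain ⟨c, rfl⟩ := Nat.Partrec.Code.exists_code.1 (Partrec.nat_iff.1 hf)
  refine ⟨fun m x => (Nat.Partrec.Code.evaln m c x).isSome = true, ?_, ?_, ?_⟩
  · refine ⟨fun p => inferInstance, ?_⟩
    refine Primrec.of_eq (Primrec.option_isSome.comp (Nat.Partrec.Code.primrec_evaln.comp
      ((Primrec.fst.pair (Primrec.const c)).pair Primrec.snd))) ?_
    intro p
    simp
  · intro m m' x hm hx
    obtain ⟨y, hy⟩ := Option.isSome_iff_exists.1 hx
    exact Option.isSome_iff_exists.2 ⟨y, Nat.Partrec.Code.evaln_mono hm hy⟩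
  · intro x
    rw [PFun.mem_dom]
    constructor
    · rintro ⟨y, hy⟩
      obtain ⟨k, hk⟩ := Nat.Partrec.Code.evaln_complete.1 hy
      exact ⟨k, Option.isSome_iff_exists.2 ⟨y, hk⟩⟩
    · rintro ⟨k, hk⟩
      obtain ⟨y, hy⟩ := Option.isSome_iff_exists.1 hk
      exact ⟨y, Nat.Partrec.Code.evaln_sound hy⟩

theorem CE.of_stages {R : ℕ → ℕ → Prop} (hR : PrimrecRel R) : CE {x | ∃ m, R m x} := by
  classical
  refine ⟨fun x => Nat.rfind fun m => (Part.some (decide (R m x)) : Part Bool),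
    Partrec.rfind ?_, ?_⟩
  · exact (PrimrecPred.decide (hR.comp Primrec.snd Primrec.fst)).to_comp.partrec
  · ext x
    change (∃ m, R m x) ↔ (Nat.rfind fun m => (Part.some (decide (R m x)) : Part Bool)).Dom
    refine Iff.trans ?_ Nat.rfind_dom.symm
    simp

theorem CE.of_primrecPred {P : ℕ → Prop} (hP : PrimrecPred P) : CE {x | P x} := by
  have := CE.of_stages (R := fun _ x => P x) (hP.comp Primrec.snd)
  simpa using this

theorem exists_index {W : Set ℕ} (h : CE W) : ∃ e, WeStd e = W := by
  obtain ⟨f, hf, rfl⟩ := h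
  obtain ⟨c, rfl⟩ := Nat.Partrec.Code.exists_code.1 (Partrec.nat_iff.1 hf)
  exact ⟨Encodable.encode c, by ext x; simp [WeStd, PFun.Dom]⟩

theorem ce_WeStd (e : ℕ) : CE (WeStd e) :=
  ⟨_, Partrec.nat_iff.2 (Nat.Partrec.Code.exists_code.2 ⟨_, rfl⟩), rfl⟩

/-! ### Primitive recursive predicates -/

theorem PrimrecPred.ball_lt {α : Type*} [Primcodable α] {f : α → ℕ} {R : ℕ → α → Prop}
    (hf : Primrec f) (hR : PrimrecRel R) : PrimrecPred fun a => ∀ x < f a, R x a :=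
  (hR.forall_mem_list.comp (Primrec.list_range.comp hf) Primrec.id).of_eq (by simp)

theorem PrimrecPred.bex_lt {α : Type*} [Primcodable α] {f : α → ℕ} {R : ℕ → α → Prop}
    (hf : Primrec f) (hR : PrimrecRel R) : PrimrecPred fun a => ∃ x < f a, R x a :=
  (hR.exists_mem_list.comp (Primrec.list_range.comp hf) Primrec.id).of_eq (by simp)

theorem PrimrecPred.imp {α : Type*} [Primcodable α] {p q : α → Prop}
    (hp : PrimrecPred p) (hq : PrimrecPred q) : PrimrecPred fun a => p a → q a :=
  (hp.not.or hq).of_eq fun _ => by tauto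

theorem primrec_pow : Primrec₂ ((· ^ ·) : ℕ → ℕ → ℕ) :=
  Primrec₂.unpaired'.1 Nat.Primrec.pow

theorem primrec_mem_Dset : PrimrecRel fun i u : ℕ => i ∈ Dset u := by
  have h : PrimrecPred fun p : ℕ × ℕ => p.2 / 2 ^ p.1 % 2 = 1 :=
    Primrec.eq.comp (Primrec.nat_mod.comp (Primrec.nat_div.comp Primrec.snd
      (primrec_pow.comp (Primrec.const 2) Primrec.fst)) (Primrec.const 2)) (Primrec.const 1)
  exact h.of_eq fun p => by simp [Dset, Nat.testBit_eq_decide_div_mod_eq]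

theorem lt_of_mem_Dset {i u : ℕ} (h : i ∈ Dset u) : i < u :=
  Nat.lt_two_pow_self.trans_le (Nat.ge_two_pow_of_testBit h)

/-- Elements of `D_v` are below `v`, so inclusion is a bounded quantification. -/
theorem primrec_Dset_subset : PrimrecRel fun v u : ℕ => Dset v ⊆ Dset u := by
  have h : PrimrecPred fun p : ℕ × ℕ => ∀ i < p.1, i ∈ Dset p.1 → i ∈ Dset p.2 :=
    PrimrecPred.ball_lt Primrec.fst (PrimrecPred.imp
      (primrec_mem_Dset.comp Primrec.fst (Primrec.fst.comp Primrec.snd))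
      (primrec_mem_Dset.comp Primrec.fst (Primrec.snd.comp Primrec.snd)))
  exact h.of_eq fun p => ⟨fun h i hi => h i (lt_of_mem_Dset hi) hi, fun h i _ hi => h hi⟩

theorem Dset_zero : Dset 0 = ∅ := by
  ext i; simp [Dset]

theorem Dset_two_pow (n : ℕ) : Dset (2 ^ n) = {n} := by
  ext i; simp [Dset, Nat.testBit_two_pow, eq_comm]

theorem Dset_or (u v : ℕ) : Dset (u ||| v) = Dset u ∪ Dset v := by
  ext i; simp [Dset]

/-! ### Enumeration operators -/

/-- Operators which ask, for each `x`, about a single finite set `D_{g x}`, and only when `P x`. -/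
theorem exists_op {P : ℕ → Prop} {g : ℕ → ℕ} (hP : PrimrecPred P) (hg : Primrec g) :
    ∃ W, CE W ∧ ∀ A, enumOp W A = {x | P x ∧ Dset (g x) ⊆ A} := by
  have h1 : Primrec fun p : ℕ => p.unpair.1 := Primrec.fst.comp Primrec.unpair
  have h2 : Primrec fun p : ℕ => p.unpair.2 := Primrec.snd.comp Primrec.unpair
  refine ⟨{p | P p.unpair.1 ∧ p.unpair.2 = g p.unpair.1}, CE.of_primrecPred
    ((hP.comp h1).and (Primrec.eq.comp h2 (hg.comp h1))), fun A => ?_⟩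
  ext x
  simp only [enumOp, Set.mem_ofPred_eq, Nat.unpair_pair]
  constructor
  · rintro ⟨u, ⟨hx, rfl⟩, hu⟩
    exact ⟨hx, hu⟩
  · rintro ⟨hx, hu⟩
    exact ⟨g x, ⟨hx, rfl⟩, hu⟩

/-- Preimage under a primitive recursive function is an enumeration operator. -/
theorem exists_preimage_op {f : ℕ → ℕ} (hf : Primrec f) :
    ∃ W, CE W ∧ ∀ A, enumOp W A = f ⁻¹' A := by
  obtain ⟨W, hW, h⟩ := exists_op (P := fun _ => True)
    (Primrec.eq.comp (Primrec.const 0) (Primrec.const 0) |>.of_eq (by simp))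
    (primrec_pow.comp (Primrec.const 2) hf)
  exact ⟨W, hW, fun A => by rw [h]; ext x; simp [Dset_two_pow]⟩

/-- The composite `Φ_{W₁} ∘ Φ_{W₂}` consists of the axioms `⟨x, u⟩` for which some `⟨x, v⟩ ∈ W₁`
is such that every `i ∈ D_v` has an axiom `⟨i, w⟩ ∈ W₂` with `D_w ⊆ D_u`. -/
theorem exists_comp_op {W₁ W₂ : Set ℕ} (h₁ : CE W₁) (h₂ : CE W₂) :
    ∃ W, CE W ∧ ∀ A, enumOp W A = enumOp W₁ (enumOp W₂ A) := by
  obtain ⟨R₁, pR₁, mono₁, hR₁⟩ := h₁.stages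
  obtain ⟨R₂, pR₂, mono₂, hR₂⟩ := h₂.stages
  refine ⟨{p | ∃ m, ∃ v < m, R₁ m (Nat.pair p.unpair.1 v) ∧ ∀ i < v, i ∈ Dset v →
    ∃ w < m, R₂ m (Nat.pair i w) ∧ Dset w ⊆ Dset p.unpair.2}, CE.of_stages ?_, fun A => ?_⟩
  · have inner : PrimrecPred fun q : ℕ × ℕ × ℕ × ℕ =>
        ∃ w < q.2.2.1, R₂ q.2.2.1 (Nat.pair q.1 w) ∧ Dset w ⊆ Dset q.2.2.2.unpair.2 := by
      refine PrimrecPred.bex_lt (Primrec.fst.comp (Primrec.snd.comp Primrec.snd))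
        (PrimrecPred.and (pR₂.comp ?_ (Primrec₂.natPair.comp ?_ ?_))
          (primrec_Dset_subset.comp ?_ ?_))
      · exact Primrec.fst.comp (Primrec.snd.comp (Primrec.snd.comp Primrec.snd))
      · exact Primrec.fst.comp Primrec.snd
      · exact Primrec.fst
      · exact Primrec.fst
      · exact Primrec.snd.comp (Primrec.unpair.comp
          (Primrec.snd.comp (Primrec.snd.comp (Primrec.snd.comp Primrec.snd))))
    have middle : PrimrecPred fun q : ℕ × ℕ × ℕ => ∀ i < q.1, i ∈ Dset q.1 →
        ∃ w < q.2.1, R₂ q.2.1 (Nat.pair i w) ∧ Dset w ⊆ Dset q.2.2.unpair.2 :=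
      PrimrecPred.ball_lt Primrec.fst (PrimrecPred.imp
        (primrec_mem_Dset.comp Primrec.fst (Primrec.fst.comp Primrec.snd)) inner)
    refine PrimrecPred.bex_lt Primrec.fst (PrimrecPred.and
      (pR₁.comp ?_ (Primrec₂.natPair.comp ?_ ?_)) middle)
    · exact Primrec.fst.comp Primrec.snd
    · exact Primrec.fst.comp (Primrec.unpair.comp (Primrec.snd.comp Primrec.snd))
    · exact Primrec.fst
  · ext x
    simp only [enumOp, Set.mem_ofPred_eq, Nat.unpair_pair]
    constructor
    · rintro ⟨u, ⟨m, v, -, hv, hi⟩, hu⟩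
      refine ⟨v, (hR₁ _).2 ⟨m, hv⟩, fun i hiv => ?_⟩
      obtain ⟨w, -, hw, hwu⟩ := hi i (lt_of_mem_Dset hiv) hiv
      exact ⟨w, (hR₂ _).2 ⟨m, hw⟩, hwu.trans hu⟩
    · rintro ⟨v, hv, hvA⟩
      -- One finite set and one stage serve all elements of `D_v` below `n`.
      have key : ∀ n, ∃ u m, Dset u ⊆ A ∧ ∀ i < n, i ∈ Dset v →
          ∃ w < m, R₂ m (Nat.pair i w) ∧ Dset w ⊆ Dset u := by
        intro n
        induction n with
        | zero => exact ⟨0, 0, by simp [Dset_zero], by simp⟩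
        | succ n ih =>
          obtain ⟨u, m, hu, hi⟩ := ih
          by_cases hn : n ∈ Dset v
          · obtain ⟨w, hw, hwA⟩ := hvA hn
            obtain ⟨k, hk⟩ := (hR₂ _).1 hw
            refine ⟨u ||| w, m + k + w + 1, ?_, fun i hin hiv => ?_⟩
            · rw [Dset_or]
              exact Set.union_subset hu hwA
            · rw [Dset_or]
              rcases Nat.lt_succ_iff_lt_or_eq.1 hin with hlt | rfl
              · obtain ⟨w', hw', hR, hs⟩ := hi i hlt hiv
                exact ⟨w', by omega, mono₂ _ _ _ (by omega) hR,
                  hs.trans Set.subset_union_left⟩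
              · exact ⟨w, by omega, mono₂ _ _ _ (by omega) hk, Set.subset_union_right⟩
          · refine ⟨u, m, hu, fun i hin hiv => ?_⟩
            rcases Nat.lt_succ_iff_lt_or_eq.1 hin with hlt | rfl
            · exact hi i hlt hiv
            · exact absurd hiv hn
      obtain ⟨u, m, hu, hi⟩ := key v
      obtain ⟨k, hk⟩ := (hR₁ _).1 hv
      refine ⟨u, ⟨m + k + v + 1, v, by omega, mono₁ _ _ _ (by omega) hk, fun i hiv hid => ?_⟩, hu⟩
      obtain ⟨w, hw, hR, hs⟩ := hi i hiv hid
      exact ⟨w, by omega, mono₂ _ _ _ (by omega) hR, hs⟩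

theorem EnumRed.trans {A B C : Set ℕ} (h₁ : EnumRed A B) (h₂ : EnumRed B C) : EnumRed A C := by
  obtain ⟨W₁, c₁, rfl⟩ := h₁
  obtain ⟨W₂, c₂, rfl⟩ := h₂
  obtain ⟨W, c, h⟩ := exists_comp_op c₁ c₂
  exact ⟨W, c, (h C).symm⟩

theorem EnumRed.of_preimage {f : ℕ → ℕ} (hf : Primrec f) (A : Set ℕ) : EnumRed (f ⁻¹' A) A := by
  obtain ⟨W, c, h⟩ := exists_preimage_op hf
  exact ⟨W, c, (h A).symm⟩

/-! ### Joins of partial functions -/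

/-- Reindexing of graphs: `⟨x, y⟩ ↦ ⟨t x, y⟩`. -/
def reindex (t : ℕ → ℕ) (n : ℕ) : ℕ := Nat.pair (t n.unpair.1) n.unpair.2

theorem primrec_reindex {t : ℕ → ℕ} (ht : Primrec t) : Primrec (reindex t) :=
  Primrec₂.natPair.comp (ht.comp (Primrec.fst.comp Primrec.unpair))
    (Primrec.snd.comp Primrec.unpair)

theorem reindex_preimage (t : ℕ → ℕ) (φ : ℕ →. ℕ) :
    reindex t ⁻¹' pgraph φ = pgraph fun x => φ (t x) := by
  ext n; simp [reindex, pgraph]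

theorem peRed_comp {t : ℕ → ℕ} (ht : Primrec t) (φ : ℕ →. ℕ) : peRed (fun x => φ (t x)) φ := by
  have := EnumRed.of_preimage (primrec_reindex ht) (pgraph φ)
  rwa [reindex_preimage] at this

theorem exists_comp_right_op {t : ℕ → ℕ} (ht : Primrec t) :
    ∃ W, CE W ∧ ∀ φ : ℕ →. ℕ, enumOp W (pgraph φ) = pgraph fun x => φ (t x) := by
  obtain ⟨W, c, h⟩ := exists_preimage_op (primrec_reindex ht)
  exact ⟨W, c, fun φ => by rw [h, reindex_preimage]⟩

theorem peRed_left (φ ψ : ℕ →. ℕ) : peRed φ (pfAdd φ ψ) := by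
  have h := peRed_comp Primrec.nat_double (pfAdd φ ψ)
  have e : (fun x => pfAdd φ ψ (2 * x)) = φ := by
    funext x; simp [pfAdd]
  rwa [e] at h

theorem peRed_right (φ ψ : ℕ →. ℕ) : peRed ψ (pfAdd φ ψ) := by
  have h := peRed_comp Primrec.nat_double_succ (pfAdd φ ψ)
  have e : (fun x => pfAdd φ ψ (2 * x + 1)) = ψ := by
    funext x
    have h1 : (2 * x + 1) % 2 = 1 := by omega
    have h2 : (2 * x + 1) / 2 = x := by omega
    simp [pfAdd, h1, h2]
  rwa [e] at h

/-- The permutation of `ℕ` exchanging `2k` and `2k+1`. -/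
def flip2 (x : ℕ) : ℕ := if x % 2 = 0 then x + 1 else x - 1

theorem primrec_even : PrimrecPred fun x : ℕ => x % 2 = 0 :=
  Primrec.eq.comp (Primrec.nat_mod.comp Primrec.id (Primrec.const 2)) (Primrec.const 0)

theorem primrec_flip2 : Primrec flip2 :=
  Primrec.ite primrec_even Primrec.succ Primrec.pred

theorem pfAdd_flip2 (φ ψ : ℕ →. ℕ) : (fun x => pfAdd φ ψ (flip2 x)) = pfAdd ψ φ := by
  funext x
  unfold pfAdd flip2
  by_cases h : x % 2 = 0
  · have h1 : ¬ (x + 1) % 2 = 0 := by omega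
    have h2 : (x + 1) / 2 = x / 2 := by omega
    simp only [h, if_true, h1, if_false, h2]
  · have h1 : (x - 1) % 2 = 0 := by omega
    have h2 : (x - 1) / 2 = x / 2 := by omega
    simp only [h, if_true, h1, if_false, h2]

theorem peRed_swap (φ ψ : ℕ →. ℕ) : peRed (pfAdd φ ψ) (pfAdd ψ φ) := by
  have h := peRed_comp primrec_flip2 (pfAdd ψ φ)
  rwa [pfAdd_flip2] at h

theorem peRed_join {φ ψ χ : ℕ →. ℕ} (h₁ : peRed φ χ) (h₂ : peRed ψ χ) : peRed (pfAdd φ ψ) χ := by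
  obtain ⟨W₁, c₁, e₁⟩ := h₁
  obtain ⟨W₂, c₂, e₂⟩ := h₂
  obtain ⟨R₁, pR₁, -, hR₁⟩ := c₁.stages
  obtain ⟨R₂, pR₂, -, hR₂⟩ := c₂.stages
  have hn : Primrec fun q : ℕ × ℕ => q.2.unpair.1 :=
    Primrec.fst.comp (Primrec.unpair.comp Primrec.snd)
  have hax : Primrec fun q : ℕ × ℕ => Nat.pair (reindex (· / 2) q.2.unpair.1) q.2.unpair.2 :=
    Primrec₂.natPair.comp ((primrec_reindex
      (Primrec.nat_div.comp Primrec.id (Primrec.const 2))).comp hn)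
      (Primrec.snd.comp (Primrec.unpair.comp Primrec.snd))
  have heven : PrimrecPred fun q : ℕ × ℕ => q.2.unpair.1.unpair.1 % 2 = 0 :=
    primrec_even.comp (Primrec.fst.comp (Primrec.unpair.comp hn))
  refine ⟨_, CE.of_stages (R := fun m p =>
    (p.unpair.1.unpair.1 % 2 = 0 ∧ R₁ m (Nat.pair (reindex (· / 2) p.unpair.1) p.unpair.2)) ∨
    (¬ p.unpair.1.unpair.1 % 2 = 0 ∧ R₂ m (Nat.pair (reindex (· / 2) p.unpair.1) p.unpair.2)))
    ((heven.and (pR₁.comp Primrec.fst hax)).or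
      (heven.not.and (pR₂.comp Primrec.fst hax))), ?_⟩
  ext n
  by_cases h : n.unpair.1 % 2 = 0
  · have : n ∈ pgraph (pfAdd φ ψ) ↔ reindex (· / 2) n ∈ pgraph φ := by
      simp [pgraph, pfAdd, h, reindex]
    rw [this, e₁]
    simp [enumOp, h, hR₁]
  · have : n ∈ pgraph (pfAdd φ ψ) ↔ reindex (· / 2) n ∈ pgraph ψ := by
      simp [pgraph, pfAdd, h, reindex]
    rw [this, e₂]
    simp only [enumOp, Set.mem_ofPred_eq, hR₂, Nat.unpair_pair, h, false_and, false_or,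
      not_false_eq_true, true_and]

/-- Prepending the value `e` is an enumeration operator on graphs: `⟨0, e⟩` is enumerated
unconditionally, and `⟨x + 1, y⟩` as soon as `⟨x, y⟩` appears in the input. -/
theorem exists_cons_op (e : ℕ) :
    ∃ W, CE W ∧ ∀ φ : ℕ →. ℕ, enumOp W (pgraph φ) = pgraph (pfCons e φ) := by
  have h1 : Primrec fun p : ℕ => p.unpair.1 := Primrec.fst.comp Primrec.unpair
  have h2 : Primrec fun p : ℕ => p.unpair.2 := Primrec.snd.comp Primrec.unpair
  have hz : PrimrecPred fun n : ℕ => n.unpair.1 = 0 := Primrec.eq.comp h1 (Primrec.const 0)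
  obtain ⟨W, c, h⟩ := exists_op
    (P := fun n => n.unpair.1 = 0 → n.unpair.2 = e)
    (g := fun n => if n.unpair.1 = 0 then 0 else 2 ^ reindex (fun x => x - 1) n)
    (hz.imp (Primrec.eq.comp h2 (Primrec.const e)))
    (Primrec.ite hz (Primrec.const 0)
      (primrec_pow.comp (Primrec.const 2) (primrec_reindex Primrec.pred)))
  refine ⟨W, c, fun φ => ?_⟩
  rw [h]
  ext n
  by_cases hn : n.unpair.1 = 0
  · simp [hn, Dset_zero, pgraph, pfCons]
  · simp [hn, Dset_two_pow, pgraph, pfCons, reindex]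

theorem exists_id_op : ∃ W, CE W ∧ ∀ A, enumOp W A = A := by
  obtain ⟨W, c, h⟩ := exists_preimage_op Primrec.id
  exact ⟨W, c, fun A => by rw [h]; rfl⟩

theorem DRed.of_subset {A B : MassPb} (h : B ⊆ A) : DRed A B := by
  obtain ⟨W, c, hW⟩ := exists_id_op
  exact ⟨W, c, fun ψ hψ => ⟨ψ, h hψ, (hW _).symm⟩⟩

/-! ### The arrow and the join of Dyment–Muchnik problems -/

theorem subset_mpArrowDM {A B Z : MassPb} (hB : UpClosedE B) (h : DRed B (mpPlus A Z)) :
    Z ⊆ mpArrowDM A B := by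
  obtain ⟨W, c, hW⟩ := h
  intro ψ hψ φ hφ
  obtain ⟨χ, hχ, e⟩ := hW _ ⟨φ, hφ, ψ, hψ, rfl⟩
  exact hB χ _ hχ ⟨W, c, e⟩

/-- Dropping the index of `e⌢φ ∈ A → B` leaves an element of `D`. -/
theorem mpArrowDM_le_mpArrow {A B : MassPb} (hB : UpClosedE B) :
    DRed (mpArrowDM A B) (mpArrow A B) := by
  obtain ⟨W, c, hW⟩ := exists_comp_right_op Primrec.succ
  refine ⟨W, c, ?_⟩
  rintro _ ⟨e, φ, rfl, h⟩
  refine ⟨φ, fun ψ hψ => ?_, ?_⟩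
  · obtain ⟨χ, hχ, hg⟩ := h ψ hψ
    have h₁ : peRed χ (pfAdd φ ψ) := ⟨_, ce_WeStd e, hg⟩
    exact hB χ _ hχ (EnumRed.trans h₁ (peRed_swap φ ψ))
  · rw [hW]
    congr 1

/-- An index of the swap operator sends every `ψ ∈ D` into `A → B`. -/
theorem mpArrow_le_mpArrowDM (A B : MassPb) : DRed (mpArrow A B) (mpArrowDM A B) := by
  obtain ⟨S, cS, hS⟩ := exists_comp_right_op primrec_flip2
  obtain ⟨e, rfl⟩ := exists_index cS
  obtain ⟨W, c, hW⟩ := exists_cons_op e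
  refine ⟨W, c, fun ψ hψ => ⟨pfCons e ψ, ⟨e, ψ, rfl, fun φ hφ => ?_⟩, (hW ψ).symm⟩⟩
  refine ⟨pfAdd φ ψ, hψ φ hφ, ?_⟩
  rw [PhiStd, hS, pfAdd_flip2]

theorem upClosedE_mpArrowDM {A B : MassPb} (hB : UpClosedE B) : UpClosedE (mpArrowDM A B) := by
  intro ψ ψ' hψ h φ hφ
  exact hB _ _ (hψ φ hφ) (peRed_join (peRed_left φ ψ') (EnumRed.trans h (peRed_right φ ψ')))

theorem mpPlus_le_inter (A B : MassPb) : DRed (mpPlus A B) (A ∩ B) := by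
  obtain ⟨W, c, hW⟩ := exists_comp_right_op
    (Primrec.nat_div.comp Primrec.id (Primrec.const 2))
  refine ⟨W, c, fun φ hφ => ⟨pfAdd φ φ, ⟨φ, hφ.1, φ, hφ.2, rfl⟩, ?_⟩⟩
  rw [hW]
  congr 1
  funext x
  simp [pfAdd]

theorem mpPlus_subset_inter {A B : MassPb} (hA : UpClosedE A) (hB : UpClosedE B) :
    mpPlus A B ⊆ A ∩ B := by
  rintro _ ⟨φ, hφ, ψ, hψ, rfl⟩
  exact ⟨hA _ _ hφ (peRed_left φ ψ), hB _ _ hψ (peRed_right φ ψ)⟩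

/-- For `B` Dyment–Muchnik and `D = {ψ : ∀ φ ∈ A, φ ⊕ ψ ∈ B}`:
(i) `B ≤_D A ⊕ D`; (ii) whenever `B ≤_D A ⊕ Z`, one has `Z ⊆ D` and hence
`D ≤_D Z`; consequently `D ≡_D A → B`; (iii) `D` is upwards `≤ₑ`-closed;
(iv) if moreover `A` is Dyment–Muchnik, then `A ⊕ B ≡_D A ∩ B`, so on
Dyment–Muchnik problems the least upper bound is given by intersection. -/
theorem dm_arrow_and_join (A B : MassPb) (hB : DMProblem B) :
    DRed B (mpPlus A (mpArrowDM A B)) ∧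
    (∀ Z : MassPb, DRed B (mpPlus A Z) → Z ⊆ mpArrowDM A B ∧ DRed (mpArrowDM A B) Z) ∧
    DEq (mpArrowDM A B) (mpArrow A B) ∧
    UpClosedE (mpArrowDM A B) ∧
    (DMProblem A → DEq (mpPlus A B) (A ∩ B)) := by
  refine ⟨DRed.of_subset ?_, fun Z hZ => ?_, ⟨mpArrowDM_le_mpArrow hB.2,
    mpArrow_le_mpArrowDM A B⟩, upClosedE_mpArrowDM hB.2, fun hA =>
    ⟨mpPlus_le_inter A B, DRed.of_subset (mpPlus_subset_inter hA.2 hB.2)⟩⟩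
  · rintro _ ⟨φ, hφ, ψ, hψ, rfl⟩
    exact hψ φ hφ
  · have h := subset_mpArrowDM hB.2 hZ
    exact ⟨h, DRed.of_subset h⟩
end
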